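/- For every legal sequence σ of moves in the auxiliary game whose initial position and resulting position both equal the starting position P, the flow through the middle triangle vertex equals the flow through the corresponding cycle vertex: F(σ, i, 2) = F(σ, 0, 3i−1) for every i with 1 ≤ i ≤ m. -/

import Mathlib

/-!
The auxiliary game of Shitov, "Chess God's number grows exponentially".

Fix `m ≥ 1`.  The graph `G` has cycle vertices `(0,t)` for `t ∈ ℤ/3m` and triangle
vertices `(i,j)` for `1 ≤ i ≤ m`, `j ∈ {1,2,3}`.  We use 0-based indices: the
triangle vertex `(i,j)` of the paper (with `1 ≤ i ≤ m`, `1 ≤ j ≤ 3`) is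
`Vtx.tri ⟨i-1⟩ ⟨j-1⟩`, and its paired cycle vertex `(0, 3i+j-3)` is
`Vtx.cycle (pairC ⟨i-1⟩ ⟨j-1⟩)` where `pairC i j = 3*i + j + 1 (mod 3m)`.
-/

namespace AuxGame

/-- What occupies a vertex: nothing, the chip, or a switch. -/
inductive Occ : Type
  | empty : Occ
  | chip : Occ
  | switch : Occ
deriving DecidableEq

/-- Vertices of the graph `G`: the big cycle of length `3m`, and `m` triangles. -/
inductive Vtx (m : ℕ) : Type
  | cycle : ZMod (3 * m) → Vtx m
  | tri : Fin m → ZMod 3 → Vtx m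
deriving DecidableEq

/-- The cycle vertex paired with the triangle vertex `(i,j)` (0-based):
this is the vertex `(0, 3i+j-3)` of the paper. -/
def pairC {m : ℕ} (i : Fin m) (j : ZMod 3) : ZMod (3 * m) :=
  ((3 * i.val + j.val + 1 : ℕ) : ZMod (3 * m))

/-- Adjacency in `G`: consecutive vertices of the big cycle, and distinct
vertices of one triangle. -/
def Adjacent {m : ℕ} : Vtx m → Vtx m → Prop
  | .cycle t, .cycle t' => t' = t + 1 ∨ t' = t - 1
  | .tri i j, .tri i' j' => i = i' ∧ j ≠ j'
  | _, _ => False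

/-- `u` and `v` form a pair `{(i,j), (0,3i+j-3)}` (in either order). -/
def IsPair {m : ℕ} : Vtx m → Vtx m → Prop
  | .tri i j, .cycle t => t = pairC i j
  | .cycle t, .tri i j => t = pairC i j
  | _, _ => False

/-- A position of the auxiliary game: every vertex is empty, or carries the chip,
or carries (exactly) one switch; there is exactly one chip; and for every pair
`{(i,j), (0,3i+j-3)}` at least one of the two vertices carries a switch. -/
structure Pos (m : ℕ) where
  occ : Vtx m → Occ
  chip_exists_unique : ∃! v : Vtx m, occ v = Occ.chip
  switch_pair : ∀ (i : Fin m) (j : ZMod 3),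
    occ (Vtx.tri i j) = Occ.switch ∨ occ (Vtx.cycle (pairC i j)) = Occ.switch

/-- A single move: the chip moves from vertex `from'` to vertex `to'`,
transforming position `src` into position `dst`. -/
structure Move (m : ℕ) where
  src : Pos m
  dst : Pos m
  from' : Vtx m
  to' : Vtx m

/-- Legality of a single move: either a *jump* (the chip moves to an adjacent
vacant vertex of its triangle, or to an adjacent vacant vertex of the cycle),
or a *swap* (the chip, standing on one vertex of a pair, is exchanged with the
switch on the other vertex of that pair).  In both cases the destination gets
the chip, the source gets whatever was at the destination (nothing for a jump,
the switch for a swap), and all other vertices are unchanged. -/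
def Move.Legal {m : ℕ} (mv : Move m) : Prop :=
  mv.src.occ mv.from' = Occ.chip ∧
  ((Adjacent mv.from' mv.to' ∧ mv.src.occ mv.to' = Occ.empty) ∨
    (IsPair mv.from' mv.to' ∧ mv.src.occ mv.to' = Occ.switch)) ∧
  mv.dst.occ mv.to' = Occ.chip ∧
  mv.dst.occ mv.from' = mv.src.occ mv.to' ∧
  ∀ w : Vtx m, w ≠ mv.from' → w ≠ mv.to' → mv.dst.occ w = mv.src.occ w

/-- `Leads σ A B`: `σ` is a legal sequence of moves with initial position `A`
and resulting position `B` (each move is legal, and the resulting position of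
each move is the initial position of the next one). -/
inductive Leads {m : ℕ} : List (Move m) → Pos m → Pos m → Prop
  | nil (A : Pos m) : Leads [] A A
  | cons (mv : Move m) (σ : List (Move m)) (B : Pos m) :
      mv.Legal → Leads σ mv.dst B → Leads (mv :: σ) mv.src B

/-- `σ` is a legal sequence of moves. -/
def LegalSeq {m : ℕ} (σ : List (Move m)) : Prop :=
  ∃ A B : Pos m, Leads σ A B

/-- `#(σ, u, v)`: the number of single moves in `σ` carrying the chip from
vertex `u` to vertex `v` (used with `u`, `v` in one component, where such moves
are exactly jumps). -/
def jmpCount {m : ℕ} (σ : List (Move m)) (u v : Vtx m) : ℕ :=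
  (σ.filter fun mv => decide (mv.from' = u ∧ mv.to' = v)).length

/-- The successor of a vertex in its own component: `(0,t) ↦ (0,t+1)` and
`(i,j) ↦ (i,j+1 mod 3)`. -/
def nxt {m : ℕ} : Vtx m → Vtx m
  | .cycle t => .cycle (t + 1)
  | .tri i j => .tri i (j + 1)

/-- The predecessor of a vertex in its own component. -/
def prv {m : ℕ} : Vtx m → Vtx m
  | .cycle t => .cycle (t - 1)
  | .tri i j => .tri i (j - 1)

/-- Twice the flow through a vertex `v = (i₀,j₀)`:
`#(σ,i₀,j₀-1,j₀) + #(σ,i₀,j₀,j₀+1) - #(σ,i₀,j₀+1,j₀) - #(σ,i₀,j₀,j₀-1)` as an integer. -/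
def dflow {m : ℕ} (σ : List (Move m)) (v : Vtx m) : ℤ :=
  (jmpCount σ (prv v) v : ℤ) + (jmpCount σ v (nxt v) : ℤ)
    - (jmpCount σ (nxt v) v : ℤ) - (jmpCount σ v (prv v) : ℤ)

/-- The flow `F(σ, i₀, j₀)` through the vertex `v = (i₀,j₀)`. -/
def flow {m : ℕ} (σ : List (Move m)) (v : Vtx m) : ℚ :=
  (dflow σ v : ℚ) / 2

/-- `P` is the starting position: switches on `(i,1)`, `(i,3)`, `(0,3i-1)`
(0-based: `tri i 0`, `tri i 2`, `cycle (pairC i 1)`), the chip on some cycle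
vertex not of the form `(0,3i-1)`, and all other vertices empty. -/
def IsStarting {m : ℕ} (P : Pos m) : Prop :=
  (∀ i : Fin m,
    P.occ (Vtx.tri i 0) = Occ.switch ∧
    P.occ (Vtx.tri i 1) = Occ.empty ∧
    P.occ (Vtx.tri i 2) = Occ.switch ∧
    P.occ (Vtx.cycle (pairC i 1)) = Occ.switch) ∧
  ∃ t : ZMod (3 * m),
    (∀ i : Fin m, t ≠ pairC i 1) ∧
    P.occ (Vtx.cycle t) = Occ.chip ∧
    ∀ s : ZMod (3 * m), s ≠ t → (∀ i : Fin m, s ≠ pairC i 1) →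
      P.occ (Vtx.cycle s) = Occ.empty

end AuxGame

namespace AuxGame

theorem pairC_inj {m : ℕ} (hm : 1 ≤ m) {i i' : Fin m} {j j' : ZMod 3}
    (h : pairC i j = pairC i' j') : i = i' ∧ j = j' := by
  unfold pairC at h
  have h2 : ((3 * i.val + j.val : ℕ) : ZMod (3 * m)) = ((3 * i'.val + j'.val : ℕ) : ZMod (3 * m)) := by
    push_cast at h ⊢
    exact add_right_cancel h
  rw [ZMod.natCast_eq_natCast_iff'] at h2
  have a1 := i.isLt
  have a2 := i'.isLt
  have b1 := ZMod.val_lt j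
  have b2 := ZMod.val_lt j'
  rw [Nat.mod_eq_of_lt (by omega), Nat.mod_eq_of_lt (by omega)] at h2
  exact ⟨Fin.ext (by omega), ZMod.val_injective 3 (by omega)⟩

theorem pairC_zero {m : ℕ} (i : Fin m) : pairC i 0 = pairC i 1 - 1 := by
  have h0 : (0 : ZMod 3).val = 0 := rfl
  have h1 : (1 : ZMod 3).val = 1 := rfl
  unfold pairC
  rw [h0, h1]; push_cast; ring

theorem pairC_two {m : ℕ} (i : Fin m) : pairC i 2 = pairC i 1 + 1 := by
  have h0 : (2 : ZMod 3).val = 2 := rfl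
  have h1 : (1 : ZMod 3).val = 1 := rfl
  unfold pairC
  rw [h0, h1]; push_cast; ring

/-- indicator -/
def ind (p : Prop) [Decidable p] : ℤ := if p then 1 else 0

def cS {m : ℕ} (o : Vtx m → Occ) (i : Fin m) (j : ZMod 3) : ℤ :=
  ind (o (.cycle (pairC i j)) = Occ.switch)

def tC {m : ℕ} (o : Vtx m → Occ) (i : Fin m) (j : ZMod 3) : ℤ :=
  ind (o (.tri i j) = Occ.chip)

def Inv {m : ℕ} (o : Vtx m → Occ) (i : Fin m) : Prop :=
  (∀ j, ¬ (o (.tri i j) = Occ.switch ∧ o (.cycle (pairC i j)) = Occ.switch)) ∧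
  cS o i 0 + cS o i 1 + cS o i 2 = 1 + tC o i 0 + tC o i 1 + tC o i 2

def phi {m : ℕ} (o : Vtx m → Occ) (i : Fin m) : ℤ :=
  if o (.tri i 1) = Occ.chip ∨ o (.cycle (pairC i 1)) = Occ.chip then
    cS o i 0 - cS o i 2 else 0

def wt {m : ℕ} (f t v : Vtx m) : ℤ :=
  ind (f = prv v ∧ t = v) + ind (f = v ∧ t = nxt v) - ind (f = nxt v ∧ t = v) - ind (f = v ∧ t = prv v)

theorem dflow_cons {m : ℕ} (mv : Move m) (σ : List (Move m)) (v : Vtx m) :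
    dflow (mv :: σ) v = wt mv.from' mv.to' v + dflow σ v := by
  have h : ∀ u w, (jmpCount (mv :: σ) u w : ℤ) = ind (mv.from' = u ∧ mv.to' = w) + jmpCount σ u w := by
    intro u w
    unfold jmpCount ind
    rw [List.filter_cons]
    by_cases hh : mv.from' = u ∧ mv.to' = w
    · simp [hh]; ring
    · simp [hh]
  unfold dflow wt
  simp only [h]; ring

theorem z3 (j : ZMod 3) : j = 0 ∨ j = 1 ∨ j = 2 := by revert j; decide

theorem step {m : ℕ} (hm : 1 ≤ m) (mv : Move m) (hl : mv.Legal) (i : Fin m)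
    (hI : Inv mv.src.occ i) : Inv mv.dst.occ i ∧
    wt mv.from' mv.to' (.tri i 1) - wt mv.from' mv.to' (.cycle (pairC i 1))
      = phi mv.dst.occ i - phi mv.src.occ i := by
  obtain ⟨src, dst, f, t⟩ := mv
  obtain ⟨hf, hmv, ht, hft, hw⟩ := hl
  simp only at *
  have hu : ∀ v, v ≠ f → src.occ v ≠ Occ.chip := by
    intro v hv h
    exact hv (src.chip_exists_unique.unique h hf)
  have hs := src.switch_pair i
  generalize src.occ = o at *
  generalize dst.occ = o' at *
  clear src dst
  have e01 : pairC i 0 ≠ pairC i 1 := fun h => absurd (pairC_inj hm h).2 (by decide)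
  have e02 : pairC i 0 ≠ pairC i 2 := fun h => absurd (pairC_inj hm h).2 (by decide)
  have e12 : pairC i 1 ≠ pairC i 2 := fun h => absurd (pairC_inj hm h).2 (by decide)
  have z0 := pairC_zero i
  have z2 := pairC_two i
  have d01 : (0 : ZMod 3) ≠ 1 := by decide
  have d02 : (0 : ZMod 3) ≠ 2 := by decide
  have d12 : (1 : ZMod 3) ≠ 2 := by decide
  have s1 : (1 : ZMod 3) + 1 = 2 := by decide
  have s2 : (1 : ZMod 3) - 1 = 0 := by decide
  obtain ⟨hI1, hI2⟩ := hI
  have A0 := hI1 0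
  have A1 := hI1 1
  have A2 := hI1 2
  have B0 := hs 0
  have B1 := hs 1
  have B2 := hs 2
  have key : (∀ j, j = 0 ∨ j = 1 ∨ j = 2 → ¬ (o' (.tri i j) = Occ.switch ∧ o' (.cycle (pairC i j)) = Occ.switch)) ∧ cS o' i 0 + cS o' i 1 + cS o' i 2 = 1 + tC o' i 0 + tC o' i 1 + tC o' i 2 ∧ wt f t (.tri i 1) - wt f t (.cycle (pairC i 1))
      = phi o' i - phi o i := by
    clear hI1 hs
    have ho' : o' = fun v => if v = t then Occ.chip else if v = f then o t else o v := by
      funext v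
      split_ifs with h1 h2
      · rw [h1, ht]
      · rw [h2, hft]
      · exact hw v h2 h1
    clear ht hft hw
    have E0 := hu (.tri i 0)
    have E1 := hu (.tri i 1)
    have E2 := hu (.tri i 2)
    have F0 := hu (.cycle (pairC i 0))
    have F1 := hu (.cycle (pairC i 1))
    have F2 := hu (.cycle (pairC i 2))
    clear hu
    simp only [forall_eq_or_imp, forall_eq]
    subst ho'
    unfold phi cS tC wt at *
    simp only [prv, nxt, s1, s2, ← z0, ← z2]
    rcases f with a | ⟨k, j⟩ <;> rcases t with b | ⟨l, j'⟩ <;> simp only [Adjacent, IsPair, false_and, or_false, false_or, Vtx.cycle.injEq, Vtx.tri.injEq, reduceCtorEq, if_false, and_false, false_and] at *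
    · -- cycle jump
      obtain ⟨hadj, hemp⟩ := hmv
      have q1 : b = pairC i 1 → a = pairC i 0 ∨ a = pairC i 2 := by
        intro h
        rw [z0, z2, ← h]
        rcases hadj with h | h
        · left; rw [h]; ring
        · right; rw [h]; ring
      have q2 : a = pairC i 1 → b = pairC i 0 ∨ b = pairC i 2 := by
        intro h
        rw [z0, z2, ← h]
        exact hadj.symm
      have q3 : a ≠ b := by
        intro h
        rw [h, hemp] at hf
        exact absurd hf (by decide)
      clear hadj z0 z2
      generalize pairC i 0 = A at *
      generalize pairC i 1 = B at *
      generalize pairC i 2 = C at *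
      simp only [reduceCtorEq, ne_eq, not_false_eq_true, forall_const, Vtx.cycle.injEq] at E0 E1 E2 F0 F1 F2
      unfold ind at *
      by_cases hb : b = B
      · subst hb
        rcases q1 rfl with rfl | rfl <;> grind
      by_cases ha : a = B
      · subst ha
        rcases q2 rfl with rfl | rfl <;> grind
      clear q1 q2
      by_cases ha0 : a = A
      · by_cases hb2 : b = C <;> grind
      by_cases ha2 : a = C
      · by_cases hb2 : b = A <;> grind
      by_cases hb0 : b = A
      · grind
      by_cases hb2 : b = C <;> grind
    · -- swap up
      obtain ⟨rfl, hsw⟩ := hmv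
      by_cases hk : l = i
      · subst hk
        unfold ind at *
        rcases z3 j' with rfl | rfl | rfl <;> grind
      · have n0 : pairC i 0 ≠ pairC l j' := fun h => hk (pairC_inj hm h).1.symm
        have n1 : pairC i 1 ≠ pairC l j' := fun h => hk (pairC_inj hm h).1.symm
        have n2 : pairC i 2 ≠ pairC l j' := fun h => hk (pairC_inj hm h).1.symm
        unfold ind at *
        grind
    · obtain ⟨rfl, hsw⟩ := hmv
      by_cases hk : k = i
      · subst hk
        unfold ind at *
        rcases z3 j with rfl | rfl | rfl <;> grind
      · have n0 : pairC i 0 ≠ pairC k j := fun h => hk (pairC_inj hm h).1.symm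
        have n1 : pairC i 1 ≠ pairC k j := fun h => hk (pairC_inj hm h).1.symm
        have n2 : pairC i 2 ≠ pairC k j := fun h => hk (pairC_inj hm h).1.symm
        unfold ind at *
        grind
    · obtain ⟨⟨rfl, hj⟩, hemp⟩ := hmv
      by_cases hk : k = i
      · subst hk
        unfold ind at *
        rcases z3 j with rfl | rfl | rfl <;> rcases z3 j' with rfl | rfl | rfl <;> grind
      · unfold ind at *
        grind
  exact ⟨⟨fun j => key.1 j (z3 j), key.2.1⟩, key.2.2⟩

theorem main {m : ℕ} (hm : 1 ≤ m) (i : Fin m) (σ : List (Move m)) (A B : Pos m)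
    (h : Leads σ A B) (hI : Inv A.occ i) :
    dflow σ (.tri i 1) - dflow σ (.cycle (pairC i 1)) = phi B.occ i - phi A.occ i := by
  induction h with
  | nil A => simp [dflow, jmpCount]
  | cons mv σ B hl _ ih =>
    obtain ⟨h1, h2⟩ := step hm mv hl i hI
    have := ih h1
    rw [dflow_cons, dflow_cons]
    linarith

theorem inv_start {m : ℕ} (hm : 1 ≤ m) (P : Pos m) (hP : IsStarting P) (i : Fin m) :
    Inv P.occ i := by
  obtain ⟨h1, t, h2, h3, h4⟩ := hP
  obtain ⟨p0, p1, p2, p3⟩ := h1 i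
  have key : ∀ j : ZMod 3, j ≠ 1 → P.occ (.cycle (pairC i j)) ≠ Occ.switch := by
    intro j hj
    by_cases ht : pairC i j = t
    · rw [ht, h3]; decide
    · rw [h4 _ ht (fun k hk => hj (pairC_inj hm hk).2)]; decide
  have k0 := key 0 (by decide)
  have k2 := key 2 (by decide)
  refine ⟨fun j => ?_, ?_⟩
  · rcases z3 j with rfl | rfl | rfl
    · exact fun h => k0 h.2
    · rw [p1]; exact fun h => absurd h.1 (by decide)
    · exact fun h => k2 h.2
  · unfold cS tC ind
    rw [p0, p1, p2, p3]
    simp [k0, k2]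

end AuxGame

open AuxGame in
/-- Lemma 1 of the paper.  For every legal sequence `σ` in the
auxiliary game whose initial and resulting positions both equal the starting
position `P`, the flow through the middle triangle vertex `(i,2)` equals the
flow through the cycle vertex `(0,3i-1)`, for every `1 ≤ i ≤ m`.
(0-based: `(i,2)` is `Vtx.tri i 1` and `(0,3i-1)` is `Vtx.cycle (pairC i 1)`.) -/
theorem statement0 (m : ℕ) (hm : 1 ≤ m) (P : Pos m) (hP : IsStarting P)
    (σ : List (Move m)) (hσ : Leads σ P P) (i : Fin m) :
    flow σ (Vtx.tri i 1) = flow σ (Vtx.cycle (pairC i 1)) := by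
  unfold flow
  have h := main hm i σ P P hσ (inv_start hm P hP i)
  have h2 : dflow σ (Vtx.tri i 1) = dflow σ (Vtx.cycle (pairC i 1)) := by linarith
  rw [h2]
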